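/- Let n ≥ 1 and let f be an integrable function on ℝ^n. Then the local maximal function M^loc f is integrable on ℝ^n if and only if ∑_{k ∈ ℤ^n} ∫_{Q_k} |f_k(x)| (1 + ln₊(|f_k(x)|/μ_k)) dx < ∞ (where terms with μ_k = 0 are interpreted as 0). -/

import Mathlib

open MeasureTheory Real Set Metric ENNReal

noncomputable section

/-- `ℝ^n` with the Euclidean norm. -/
abbrev En (n : ℕ) := EuclideanSpace ℝ (Fin n)

/-- `ln₊ t = max (ln t) 0`. -/
def lnp (t : ℝ) : ℝ := max (Real.log t) 0

/-- The unit cube `Q = (-1/2, 1/2)^n`. -/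
def unitQ (n : ℕ) : Set (En n) := {x | ∀ i, -(1/2 : ℝ) < x i ∧ x i < 1/2}

/-- The dilate `φ_t(y) = t^{-n} φ(y/t)` convolved with `f` at `x`:
`(φ_t ∗ f)(x) = ∫ t^{-n} φ((x-y)/t) f(y) dy`. -/
def phiConv (n : ℕ) (φ f : En n → ℝ) (t : ℝ) (x : En n) : ℝ :=
  ∫ y, (t ^ n)⁻¹ * φ (t⁻¹ • (x - y)) * f y

/-- The maximal function `𝓜_φ f(x) = sup_{t>0} |(φ_t ∗ f)(x)|`. -/
def Mphi (n : ℕ) (φ f : En n → ℝ) (x : En n) : ℝ :=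
  ⨆ t : {t : ℝ // 0 < t}, |phiConv n φ f t.1 x|

/-- A smooth function supported in the closed unit ball with integral `1`. -/
def IsTestFun (n : ℕ) (φ : En n → ℝ) : Prop :=
  ContDiff ℝ (⊤ : ℕ∞) φ ∧ (∀ x, x ∉ Metric.closedBall (0 : En n) 1 → φ x = 0) ∧ (∫ x, φ x) = 1

/-- Membership in the Hardy space `H^1(ℝ^n)`: the maximal function `𝓜_φ f` is
integrable for every admissible `φ`. -/
def MemH1 (n : ℕ) (f : En n → ℝ) : Prop :=
  ∀ φ : En n → ℝ, IsTestFun n φ → Integrable (Mphi n φ f)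

/-- The cube `Q_k = k + Q` for `k ∈ ℤ^n`. -/
def Qk (n : ℕ) (k : Fin n → ℤ) : Set (En n) :=
  {x | ∀ i, (k i : ℝ) - 1/2 < x i ∧ x i < (k i : ℝ) + 1/2}

/-- The lattice point `k ∈ ℤ^n` viewed as a point of `ℝ^n`. -/
def zv (n : ℕ) (k : Fin n → ℤ) : En n :=
  (EuclideanSpace.equiv (Fin n) ℝ).symm (fun i => (k i : ℝ))

/-- `μ_k = ‖f_k‖_{L^1} = ∫_{Q_k} |f|`. -/
def muk (n : ℕ) (f : En n → ℝ) (k : Fin n → ℤ) : ℝ := ∫ x in Qk n k, |f x|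

/-- The local Hardy–Littlewood maximal function
`M^loc f(x) = sup_{0<r<1} r^{-n} ∫_{|y-x|<r} |f(y)| dy`. -/
def Mloc (n : ℕ) (f : En n → ℝ) (x : En n) : ℝ :=
  ⨆ r : Set.Ioo (0 : ℝ) 1, ((r : ℝ) ^ n)⁻¹ * ∫ y in Metric.ball x (r : ℝ), |f y|

/-!
Below the scale `1` the maximal function of `f` at level `t` obeys, up to dimensional constants,
the weak-type inequality `t |{M f > 2 t}| ≲ ∫_{|f| > t} |f|` and its converse
`∫_{|f| > t} |f| ≲ t |{M f ≳ t}|`, the latter for `t` so large that no ball of radius at least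
`1 / 2` has mean above `t`. Both come from the Vitali covering lemma; for the converse
one takes at `x` a ball whose mean exceeds `t` while that of its fivefold enlargement does not.
Integrating over `t`, with `∫_b^{|f|} dt / t = ln₊ (|f| / b)`, compares `∫ M f` with
`∫ |f| (1 + ln₊ (|f| / ‖f‖₁))` for `f` supported in one cube; since `M f` only sees `f` up to
distance `1` and the unit neighbourhoods of the cubes have bounded overlap, the comparisons for
the pieces `f_k` add up.
-/

open Filter Topology

lemma lnp_eq_posLog : lnp = posLog := by
  funext t
  rw [lnp, max_comm, posLog]

lemma lnp_nonneg (t : ℝ) : 0 ≤ lnp t := le_max_right _ _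

lemma measurable_lnp : Measurable lnp := measurable_log.max measurable_const

lemma lnp_mul_le (a b : ℝ) : lnp (a * b) ≤ lnp a + lnp b := by
  simpa only [lnp_eq_posLog] using posLog_mul

section LayerCake

variable {α : Type*} [MeasurableSpace α] {μ : Measure α}

lemma lintegral_eq_lintegral_meas_ofReal_lt {F : α → ℝ≥0∞} (hF : AEMeasurable F μ) :
    ∫⁻ x, F x ∂μ = ∫⁻ t in Ioi (0 : ℝ), μ {x | ENNReal.ofReal t < F x} := by
  by_cases hfin : ∀ᵐ x ∂μ, F x ≠ ⊤
  · calc ∫⁻ x, F x ∂μ = ∫⁻ x, ENNReal.ofReal (F x).toReal ∂μ :=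
          lintegral_congr_ae <| hfin.mono fun x hx => (ENNReal.ofReal_toReal hx).symm
      _ = ∫⁻ t in Ioi (0 : ℝ), μ {x | t < (F x).toReal} :=
          lintegral_eq_lintegral_meas_lt μ (ae_of_all _ fun _ => ENNReal.toReal_nonneg)
            hF.ennreal_toReal
      _ = ∫⁻ t in Ioi (0 : ℝ), μ {x | ENNReal.ofReal t < F x} := by
          refine setLIntegral_congr_fun measurableSet_Ioi fun t (ht : 0 < t) => ?_
          refine measure_congr (hfin.mono fun x hx => propext ?_)
          exact (ENNReal.ofReal_lt_iff_lt_toReal ht.le hx).symm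
  · have htop : μ {x | F x = ⊤} ≠ 0 := by simpa [ae_iff] using hfin
    rw [lintegral_eq_top_of_measure_eq_top_ne_zero hF htop, eq_comm, eq_top_iff]
    calc ⊤ = ∫⁻ _ in Ioi (0 : ℝ), μ {x | F x = ⊤} := by simp [htop]
      _ ≤ ∫⁻ t in Ioi (0 : ℝ), μ {x | ENNReal.ofReal t < F x} :=
          lintegral_mono fun t => measure_mono fun x (hx : F x = ⊤) =>
            (ENNReal.ofReal_lt_top.trans_eq hx.symm :)

lemma lintegral_eq_mul_lintegral_meas_mul_ofReal_lt {F : α → ℝ≥0∞} (hF : AEMeasurable F μ)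
    {c : ℝ≥0∞} (hc₀ : c ≠ 0) (hc : c ≠ ⊤) :
    ∫⁻ x, F x ∂μ = c * ∫⁻ t in Ioi (0 : ℝ), μ {x | c * ENNReal.ofReal t < F x} := by
  calc ∫⁻ x, F x ∂μ = c * ∫⁻ x, F x / c ∂μ := by
        rw [← lintegral_const_mul' c _ hc]
        exact lintegral_congr fun x => (ENNReal.mul_div_cancel hc₀ hc).symm
    _ = c * ∫⁻ t in Ioi (0 : ℝ), μ {x | c * ENNReal.ofReal t < F x} := by
        simp only [lintegral_eq_lintegral_meas_ofReal_lt (hF.div_const c),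
          ENNReal.lt_div_iff_mul_lt (.inl hc₀) (.inl hc), mul_comm]

lemma intervalIntegral_indicator_Ioi_inv {b u : ℝ} (hb : 0 < b) (hu : 0 ≤ u) :
    ∫ t in 0..u, (Ioi b).indicator (fun s => s⁻¹) t = lnp (u / b) := by
  rw [intervalIntegral.integral_of_le hu, setIntegral_indicator measurableSet_Ioi,
    Ioc_inter_Ioi, max_eq_right hb.le]
  rcases le_total u b with hub | hbu
  · have hlog : log (u / b) ≤ 0 := log_nonpos (by positivity) ((div_le_one hb).2 hub)
    rw [Ioc_eq_empty_of_le hub, setIntegral_empty, lnp, max_eq_right hlog]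
  · have hlog : 0 ≤ log (u / b) := log_nonneg ((one_le_div hb).2 hbu)
    rw [← intervalIntegral.integral_of_le hbu, integral_inv_of_pos hb (hb.trans_le hbu), lnp,
      max_eq_left hlog]

lemma intervalIntegrable_indicator_Ioi_inv {b t : ℝ} (hb : 0 < b) (ht : 0 ≤ t) :
    IntervalIntegrable ((Ioi b).indicator fun s => s⁻¹) volume 0 t := by
  have hcont : ContinuousOn (fun s : ℝ => s⁻¹) (Icc b t) :=
    continuousOn_inv₀.mono fun s hs => (hb.trans_le hs.1).ne'
  rw [intervalIntegrable_iff_integrableOn_Ioc_of_le ht, IntegrableOn,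
    integrable_indicator_iff measurableSet_Ioi, IntegrableOn,
    Measure.restrict_restrict measurableSet_Ioi]
  exact hcont.integrableOn_Icc.mono_set fun s hs => ⟨(mem_Ioi.1 hs.1).le, hs.2.2⟩

lemma lintegral_lnp_div {h : α → ℝ} (h_nonneg : 0 ≤ᵐ[μ] h) (h_meas : AEMeasurable h μ)
    {b : ℝ} (hb : 0 < b) :
    ∫⁻ x, ENNReal.ofReal (lnp (h x / b)) ∂μ =
      ∫⁻ t in Ioi b, μ {x | t < h x} * ENNReal.ofReal t⁻¹ := by
  calc ∫⁻ x, ENNReal.ofReal (lnp (h x / b)) ∂μ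
      = ∫⁻ x, ENNReal.ofReal (∫ t in 0..h x, (Ioi b).indicator (fun s => s⁻¹) t) ∂μ :=
        lintegral_congr_ae <| h_nonneg.mono fun x hx => by
          simp only [intervalIntegral_indicator_Ioi_inv hb hx]
    _ = ∫⁻ t in Ioi 0, μ {x | t < h x} * ENNReal.ofReal ((Ioi b).indicator (fun s => s⁻¹) t) :=
        lintegral_comp_eq_lintegral_meas_lt_mul μ h_nonneg h_meas
          (fun t ht => intervalIntegrable_indicator_Ioi_inv hb ht.le)
          (ae_of_all _ fun t => indicator_nonneg (fun s hs => inv_nonneg.2 (hb.trans hs).le) t)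
    _ = ∫⁻ t in Ioi 0,
          (Ioi b).indicator (fun s => μ {x | s < h x} * ENNReal.ofReal s⁻¹) t := by
        refine lintegral_congr fun t => ?_
        by_cases ht : t ∈ Ioi b <;> simp [ht]
    _ = ∫⁻ t in Ioi b, μ {x | t < h x} * ENNReal.ofReal t⁻¹ := by
        rw [setLIntegral_indicator measurableSet_Ioi, Ioi_inter_Ioi, max_eq_left hb.le]

end LayerCake

section LocalMaximal

variable {X : Type*} [PseudoMetricSpace X] [MeasurableSpace X] {μ : Measure X}
  {g g' : X → ℝ≥0∞} {x : X}

/-- The centred maximal function of `g` at scales below `1`, normalised by the `μ`-measure of the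
balls; for Lebesgue measure it differs from `Mloc` by the volume of the unit ball. -/
def localMaximal (μ : Measure X) (g : X → ℝ≥0∞) (x : X) : ℝ≥0∞ :=
  ⨆ r : Ioo (0 : ℝ) 1, ⨍⁻ y in ball x r, g y ∂μ

lemma laverage_ball_le_localMaximal {r : ℝ} (hr : r ∈ Ioo 0 1) :
    ⨍⁻ y in ball x r, g y ∂μ ≤ localMaximal μ g x :=
  le_iSup (fun r : Ioo (0 : ℝ) 1 => ⨍⁻ y in ball x r, g y ∂μ) ⟨r, hr⟩

lemma localMaximal_le {c : ℝ≥0∞} (h : ∀ r ∈ Ioo (0 : ℝ) 1, ⨍⁻ y in ball x r, g y ∂μ ≤ c) :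
    localMaximal μ g x ≤ c :=
  iSup_le fun r => h r r.2

lemma exists_laverage_ball_gt_of_lt_localMaximal {s : ℝ≥0∞} (h : s < localMaximal μ g x) :
    ∃ r ∈ Ioo (0 : ℝ) 1, s < ⨍⁻ y in ball x r, g y ∂μ :=
  let ⟨r, hr⟩ := lt_iSup_iff.1 h
  ⟨r, r.2, hr⟩

lemma localMaximal_mono_ae (h : g ≤ᵐ[μ] g') (x : X) : localMaximal μ g x ≤ localMaximal μ g' x :=
  iSup_mono fun _ => setLAverage_mono_ae _ h

lemma localMaximal_eq_zero_of_ae_eq_zero (h : g =ᵐ[μ] 0) (x : X) : localMaximal μ g x = 0 := by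
  refine nonpos_iff_eq_zero.1 ((localMaximal_mono_ae h.le x).trans (localMaximal_le fun r _ => ?_))
  simp

lemma localMaximal_add_const_le (g : X → ℝ≥0∞) (c : ℝ≥0∞) (x : X) :
    localMaximal μ (fun y => g y + c) x ≤ localMaximal μ g x + c := by
  refine localMaximal_le fun r hr => ?_
  rw [laverage, lintegral_add_right _ measurable_const, lintegral_const]
  refine add_le_add (laverage_ball_le_localMaximal hr) (mul_le_of_le_one_right' ?_)
  simpa only [Measure.smul_apply, smul_eq_mul] using ENNReal.inv_mul_le_one _

lemma localMaximal_tsum_le {ι : Type*} [Countable ι] {G : ι → X → ℝ≥0∞}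
    (hG : ∀ k, AEMeasurable (G k) μ) (x : X) :
    localMaximal μ (fun y => ∑' k, G k y) x ≤ ∑' k, localMaximal μ (G k) x := by
  refine localMaximal_le fun r hr => ?_
  rw [laverage, lintegral_tsum fun k => (hG k).restrict.smul_measure _]
  exact ENNReal.tsum_le_tsum fun k => laverage_ball_le_localMaximal hr

lemma localMaximal_congr_of_eqOn_ball [OpensMeasurableSpace X] (h : EqOn g g' (ball x 1)) :
    localMaximal μ g x = localMaximal μ g' x :=
  iSup_congr fun r =>
    setLAverage_congr_fun measurableSet_ball (h.mono (ball_subset_ball r.2.2.le))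

lemma localMaximal_eq_zero_of_notMem_thickening_support [OpensMeasurableSpace X]
    (hx : x ∉ thickening 1 (Function.support g)) : localMaximal μ g x = 0 := by
  have hzero : EqOn g 0 (ball x 1) := fun y hy => by
    by_contra hgy
    exact hx (mem_thickening_iff.2 ⟨y, hgy, mem_ball'.1 hy⟩)
  rw [localMaximal_congr_of_eqOn_ball hzero]
  exact localMaximal_eq_zero_of_ae_eq_zero (ae_eq_refl 0) x

lemma measure_lt_localMaximal_le_measure_thickening [OpensMeasurableSpace X] (s : ℝ≥0∞) :
    μ {x | s < localMaximal μ g x} ≤ μ (thickening 1 (Function.support g)) := by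
  refine measure_mono fun x (hx : s < localMaximal μ g x) => ?_
  contrapose! hx
  simp [localMaximal_eq_zero_of_notMem_thickening_support hx]

lemma lowerSemicontinuous_measure_ball (ν : Measure X) (r : ℝ) :
    LowerSemicontinuous fun x => ν (ball x r) := by
  intro x c hc
  replace hc : c < ν (ball x r) := hc
  obtain ⟨u, hu_mono, hu_lt, hu_lim⟩ := exists_seq_strictMono_tendsto r
  have hunion : ball x r = ⋃ j, ball x (u j) := by
    refine Subset.antisymm (fun y hy => ?_) (iUnion_subset fun j => ball_subset_ball (hu_lt j).le)
    obtain ⟨j, hj⟩ := (hu_lim.eventually (lt_mem_nhds (mem_ball.1 hy))).exists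
    exact mem_iUnion.2 ⟨j, hj⟩
  have hmono : Monotone fun j => ball x (u j) := fun i j hij =>
    ball_subset_ball (hu_mono.monotone hij)
  rw [hunion, hmono.measure_iUnion, lt_iSup_iff] at hc
  obtain ⟨j, hj⟩ := hc
  filter_upwards [ball_mem_nhds x (sub_pos.2 (hu_lt j))] with y hy
  refine hj.trans_le (measure_mono (ball_subset_ball' ?_))
  linarith [mem_ball'.1 hy]

lemma measure_le_of_measure_ball_five_mul_le [TopologicalSpace.SeparableSpace X]
    [OpensMeasurableSpace X] {ν : Measure X} {S T : Set X} {C : ℝ≥0∞}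
    (h : ∀ x ∈ S, ∃ r ∈ Ioo (0 : ℝ) 1, ball x r ⊆ T ∧ μ (ball x (5 * r)) ≤ C * ν (ball x r)) :
    μ S ≤ C * ν T := by
  choose! r hr hrT hμν using h
  obtain ⟨u, huS, hdisj, hcover⟩ := Vitali.exists_disjoint_subfamily_covering_enlargement_ball
    S (fun x => x) r 1 (fun x hx => (hr x hx).2.le) 5 (by norm_num)
  have hcount : u.Countable := hdisj.countable_of_isOpen (fun _ _ => isOpen_ball)
    fun x hx => ⟨x, mem_ball_self (hr x (huS hx)).1⟩
  have hsub : S ⊆ ⋃ b ∈ u, ball b (5 * r b) := fun a ha =>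
    let ⟨_, hb, hab⟩ := hcover a ha
    mem_biUnion hb (hab (mem_ball_self (hr a ha).1))
  calc μ S ≤ μ (⋃ b ∈ u, ball b (5 * r b)) := measure_mono hsub
    _ ≤ ∑' b : u, μ (ball (b : X) (5 * r b)) := measure_biUnion_le _ hcount _
    _ ≤ ∑' b : u, C * ν (ball (b : X) (r b)) :=
        ENNReal.tsum_le_tsum fun b => hμν b (huS b.2)
    _ = C * ν (⋃ b ∈ u, ball b (r b)) := by
        rw [ENNReal.tsum_mul_left, measure_biUnion hcount hdisj fun _ _ => measurableSet_ball]
    _ ≤ C * ν T := by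
        gcongr
        exact iUnion₂_subset fun b hb => hrT b (huS hb)

end LocalMaximal

lemma exists_last_scale {p : ℝ → Prop} {c r₀ R : ℝ} (hc : 1 < c) (hr₀ : 0 < r₀) (hp : p r₀)
    (hR : ∀ r, R ≤ r → ¬ p r) : ∃ r, 0 < r ∧ p r ∧ ¬ p (c * r) := by
  by_contra! hstep
  have hall : ∀ j : ℕ, p (c ^ j * r₀) := by
    intro j
    induction j with
    | zero => simpa using hp
    | succ j ih =>
      rw [pow_succ', mul_assoc]
      exact hstep _ (by positivity) ih
  obtain ⟨j, hj⟩ := pow_unbounded_of_one_lt (R / r₀) hc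
  exact hR _ ((div_le_iff₀ hr₀).1 hj.le) (hall j)

section LLogL

variable {α F : Type*} [MeasurableSpace α] [NormedAddCommGroup F] {μ : Measure α} {f : α → F}

/-- The size `∫ |f| (1 + ln₊ (|f| / ‖f‖₁)) dμ` of `f` in the class `L log L`, the logarithm being
taken relative to `‖f‖₁ = ∫ |f| dμ`. -/
def lLogL (μ : Measure α) (f : α → F) : ℝ≥0∞ :=
  ∫⁻ x, ENNReal.ofReal (‖f x‖ * (1 + lnp (‖f x‖ / ∫ y, ‖f y‖ ∂μ))) ∂μ

lemma lLogL_eq_lintegral_enorm_add (hf : AEStronglyMeasurable f μ) :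
    lLogL μ f = ∫⁻ x, ‖f x‖ₑ ∂μ +
      ∫⁻ x, ENNReal.ofReal (lnp (‖f x‖ / ∫ y, ‖f y‖ ∂μ)) ∂μ.withDensity fun x => ‖f x‖ₑ := by
  have hlog : AEMeasurable (fun x => ENNReal.ofReal (lnp (‖f x‖ / ∫ y, ‖f y‖ ∂μ))) μ :=
    (measurable_lnp.comp_aemeasurable (hf.norm.aemeasurable.div_const _)).ennreal_ofReal
  rw [lintegral_withDensity_eq_lintegral_mul₀ hf.enorm hlog, ← lintegral_add_left' hf.enorm, lLogL]
  refine lintegral_congr fun x => ?_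
  rw [ENNReal.ofReal_mul (norm_nonneg _), ENNReal.ofReal_add zero_le_one (lnp_nonneg _),
    ENNReal.ofReal_one, mul_one_add, ofReal_norm, Pi.mul_apply]

lemma lintegral_lnp_norm_div_withDensity (hf : AEStronglyMeasurable f μ) {b : ℝ} (hb : 0 < b) :
    ∫⁻ x, ENNReal.ofReal (lnp (‖f x‖ / b)) ∂μ.withDensity (fun x => ‖f x‖ₑ) =
      ∫⁻ t in Ioi b, μ.withDensity (fun x => ‖f x‖ₑ) {x | ENNReal.ofReal t < ‖f x‖ₑ} /
        ENNReal.ofReal t := by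
  rw [lintegral_lnp_div (ae_of_all _ fun _ => norm_nonneg _)
    (hf.norm.aemeasurable.mono_ac (withDensity_absolutelyContinuous _ _)) hb]
  refine setLIntegral_congr_fun measurableSet_Ioi fun t ht => ?_
  have ht₀ : 0 < t := hb.trans ht
  simp only [← ofReal_norm, ENNReal.ofReal_lt_ofReal_iff_of_nonneg ht₀.le,
    ENNReal.ofReal_inv_of_pos ht₀, div_eq_mul_inv]

lemma integral_norm_pos_of_not_ae_eq_zero (hf : Integrable f μ) (hf₀ : ¬ f =ᵐ[μ] 0) :
    0 < ∫ x, ‖f x‖ ∂μ := by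
  refine (integral_nonneg fun _ => norm_nonneg _).lt_of_ne' fun hzero => hf₀ ?_
  filter_upwards [(integral_eq_zero_iff_of_nonneg (fun _ => norm_nonneg _) hf.norm).1 hzero]
    with x hx using norm_eq_zero.1 hx

lemma lLogL_eq_zero_of_ae_eq_zero (hf : f =ᵐ[μ] 0) : lLogL μ f = 0 := by
  refine (lintegral_congr_ae (hf.mono fun x hx => ?_)).trans lintegral_zero
  simp [hx]

lemma lLogL_indicator {S : Set α} (hS : MeasurableSet S) (f : α → F) :
    lLogL μ (S.indicator f) = lLogL (μ.restrict S) f := by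
  have hint : ∫ y, ‖S.indicator f y‖ ∂μ = ∫ y in S, ‖f y‖ ∂μ := by
    simp only [norm_indicator_eq_indicator_norm, integral_indicator hS]
  rw [lLogL, lLogL, hint, ← lintegral_indicator hS]
  refine lintegral_congr fun x => ?_
  by_cases hx : x ∈ S <;> simp [hx]

end LLogL

section Haar

open Module

variable {E : Type*} [NormedAddCommGroup E] [NormedSpace ℝ E] [FiniteDimensional ℝ E]
  [MeasurableSpace E] [BorelSpace E] {μ : Measure E} [μ.IsAddHaarMeasure]
  {g : E → ℝ≥0∞} {x y : E} {r : ℝ} {s : ℝ≥0∞}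

lemma measure_ball_ofNat_mul (c : ℕ) [c.AtLeastTwo] (x : E) (r : ℝ) :
    μ (ball x (OfNat.ofNat c * r)) = OfNat.ofNat c ^ finrank ℝ E * μ (ball x r) := by
  have hc : (0 : ℝ) < OfNat.ofNat c := Nat.ofNat_pos
  rw [Measure.addHaar_ball_mul_of_pos μ x hc, Measure.addHaar_ball_center μ x,
    ENNReal.ofReal_pow hc.le, ENNReal.ofReal_ofNat]

lemma lt_laverage_ball_iff (hr : 0 < r) :
    s < ⨍⁻ y in ball x r, g y ∂μ ↔ s * μ (ball x r) < μ.withDensity g (ball x r) := by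
  rw [setLAverage_eq, ← withDensity_apply g measurableSet_ball,
    ENNReal.lt_div_iff_mul_lt (.inl (measure_ball_pos μ x hr).ne') (.inl measure_ball_lt_top.ne)]

variable (μ g) in
lemma measurable_localMaximal : Measurable (localMaximal μ g) := by
  refine LowerSemicontinuous.measurable (lowerSemicontinuous_iSup fun ⟨r, hr⟩ x s hs => ?_)
  replace hs : s < ⨍⁻ y in ball x r, g y ∂μ := hs
  simp only [lt_laverage_ball_iff hr.1, Measure.addHaar_ball_center] at hs ⊢
  exact lowerSemicontinuous_measure_ball _ r x _ hs

lemma mul_measure_lt_localMaximal_le (g : E → ℝ≥0∞) (s : ℝ≥0∞) :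
    s * μ {x | s < localMaximal μ g x} ≤ 5 ^ finrank ℝ E * ∫⁻ x, g x ∂μ := by
  have hcover : (s • μ) {x | s < localMaximal μ g x} ≤
      5 ^ finrank ℝ E * μ.withDensity g univ := by
    refine measure_le_of_measure_ball_five_mul_le fun x hx => ?_
    obtain ⟨r, hr, hrs⟩ := exists_laverage_ball_gt_of_lt_localMaximal hx
    refine ⟨r, hr, subset_univ _, ?_⟩
    rw [Measure.smul_apply, smul_eq_mul, measure_ball_ofNat_mul, mul_left_comm]
    gcongr
    exact ((lt_laverage_ball_iff hr.1).1 hrs).le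
  simpa only [Measure.smul_apply, smul_eq_mul, withDensity_apply _ MeasurableSet.univ,
    Measure.restrict_univ] using hcover

lemma mul_measure_two_mul_lt_localMaximal_le (g : E → ℝ≥0∞) (s : ℝ≥0∞) :
    s * μ {x | 2 * s < localMaximal μ g x} ≤
      5 ^ finrank ℝ E * μ.withDensity g {x | s < g x} := by
  set gs : E → ℝ≥0∞ := {x | s < g x}.indicator g
  have hg : ∀ y, g y ≤ gs y + s := fun y => by
    by_cases hy : s < g y
    · exact le_add_right (indicator_of_mem (s := {x | s < g x}) hy g).ge
    · exact le_add_left (not_lt.1 hy)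
  have hsub : {x | 2 * s < localMaximal μ g x} ⊆ {x | s < localMaximal μ gs x} := fun x hx => by
    refine lt_of_add_lt_add_right (a := s) ?_
    calc s + s = 2 * s := (two_mul s).symm
      _ < localMaximal μ g x := hx
      _ ≤ localMaximal μ (fun y => gs y + s) x := localMaximal_mono_ae (ae_of_all _ hg) x
      _ ≤ localMaximal μ gs x + s := localMaximal_add_const_le gs s x
  calc s * μ {x | 2 * s < localMaximal μ g x}
      ≤ s * μ {x | s < localMaximal μ gs x} := by gcongr
    _ ≤ 5 ^ finrank ℝ E * ∫⁻ x, gs x ∂μ := mul_measure_lt_localMaximal_le gs s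
    _ ≤ 5 ^ finrank ℝ E * μ.withDensity g {x | s < g x} := by
        rw [withDensity_apply']
        gcongr 5 ^ _ * ?_
        exact lintegral_indicator_le _ _

lemma ae_tendsto_laverage_ball (hg : AEMeasurable g μ) (hg_fin : ∫⁻ x, g x ∂μ ≠ ⊤) :
    ∀ᵐ x ∂μ, Tendsto (fun r => ⨍⁻ y in ball x r, g y ∂μ) (𝓝[>] 0) (𝓝 (g x)) := by
  filter_upwards [(Besicovitch.vitaliFamily μ).ae_tendsto_lintegral_div hg hg_fin] with x hx
  refine (hx.comp (Besicovitch.tendsto_filterAt μ x)).congr' ?_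
  filter_upwards [self_mem_nhdsWithin] with r (hr : 0 < r)
  have hball : ball x r =ᵐ[μ] closedBall x r := by
    rw [← ball_union_sphere]
    exact (union_ae_eq_left_of_ae_eq_empty
      (ae_eq_empty.2 (Measure.addHaar_sphere_of_ne_zero μ x hr.ne'))).symm
  rw [setLAverage_congr hball, setLAverage_eq, Function.comp_apply]

lemma ae_le_localMaximal (hg : AEMeasurable g μ) (hg_fin : ∫⁻ x, g x ∂μ ≠ ⊤) :
    g ≤ᵐ[μ] localMaximal μ g := by
  filter_upwards [ae_tendsto_laverage_ball hg hg_fin] with x hx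
  refine le_of_tendsto hx ?_
  filter_upwards [Ioo_mem_nhdsGT one_pos] with r hr
  exact laverage_ball_le_localMaximal hr

lemma laverage_ball_le_two_pow_mul_laverage_ball (hy : y ∈ ball x r) :
    ⨍⁻ z in ball x r, g z ∂μ ≤ 2 ^ finrank ℝ E * ⨍⁻ z in ball y (2 * r), g z ∂μ := by
  have hsub : ball x r ⊆ ball y (2 * r) :=
    ball_subset_ball' (by linarith [mem_ball'.1 hy])
  have hvol : (μ (ball x r))⁻¹ = 2 ^ finrank ℝ E * (μ (ball y (2 * r)))⁻¹ := by
    rw [measure_ball_ofNat_mul, Measure.addHaar_ball_center μ x, Measure.addHaar_ball_center μ y,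
      ENNReal.mul_inv (.inl (by simp)) (.inl (by simp)), ← mul_assoc,
      ENNReal.mul_inv_cancel (by simp) (by simp), one_mul]
  rw [setLAverage_eq, setLAverage_eq, ENNReal.div_eq_inv_mul, ENNReal.div_eq_inv_mul, hvol,
    mul_assoc]
  gcongr

lemma withDensity_gt_le_mul_measure_lt_localMaximal (hg : AEMeasurable g μ)
    (hg_fin : ∫⁻ x, g x ∂μ ≠ ⊤) (hs : ∫⁻ x, g x ∂μ ≤ s * μ (ball 0 (1 / 2))) :
    μ.withDensity g {x | s < g x} ≤
      5 ^ finrank ℝ E * s * μ {x | s < 2 ^ finrank ℝ E * localMaximal μ g x} := by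
  set L : Set E := {x | Tendsto (fun r => ⨍⁻ y in ball x r, g y ∂μ) (𝓝[>] 0) (𝓝 (g x))}
  have hL : ∀ᵐ x ∂μ.withDensity g, x ∈ L :=
    (withDensity_absolutelyContinuous μ g).ae_le (ae_tendsto_laverage_ball hg hg_fin)
  have hlarge : ∀ x r, 1 / 2 ≤ r → ¬ s < ⨍⁻ y in ball x r, g y ∂μ := fun x r hr => by
    rw [lt_laverage_ball_iff (by linarith), not_lt, withDensity_apply _ measurableSet_ball]
    calc ∫⁻ y in ball x r, g y ∂μ ≤ ∫⁻ y, g y ∂μ := setLIntegral_le_lintegral _ _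
      _ ≤ s * μ (ball x (1 / 2)) := by rwa [Measure.addHaar_ball_center]
      _ ≤ s * μ (ball x r) := by gcongr
  calc μ.withDensity g {x | s < g x}
      ≤ μ.withDensity g ({x | s < g x} ∩ L) := measure_mono_ae (hL.mono fun x hx h => ⟨h, hx⟩)
    _ ≤ 5 ^ finrank ℝ E * s * μ {x | s < 2 ^ finrank ℝ E * localMaximal μ g x} := by
        refine measure_le_of_measure_ball_five_mul_le fun x ⟨hsx, hxL⟩ => ?_
        obtain ⟨r₀, hr₀, hsr₀⟩ :=
          ((hxL.eventually (lt_mem_nhds hsx)).and self_mem_nhdsWithin).exists.imp fun _ => And.symm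
        obtain ⟨r, hr, hsr, hsr'⟩ :=
          exists_last_scale (c := 5) (by norm_num) hr₀ hsr₀ (hlarge x)
        have hr_lt : r < 1 / 2 := not_le.1 fun h => hlarge x r h hsr
        refine ⟨r, ⟨hr, by linarith⟩, fun y hy => ?_, ?_⟩
        · calc s < ⨍⁻ z in ball x r, g z ∂μ := hsr
            _ ≤ 2 ^ finrank ℝ E * ⨍⁻ z in ball y (2 * r), g z ∂μ :=
                laverage_ball_le_two_pow_mul_laverage_ball hy
            _ ≤ 2 ^ finrank ℝ E * localMaximal μ g y := by
                gcongr
                exact laverage_ball_le_localMaximal ⟨by linarith, by linarith⟩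
        · rw [lt_laverage_ball_iff (by linarith), not_lt,
            measure_ball_ofNat_mul (μ := μ)] at hsr'
          rwa [mul_comm _ s, mul_assoc]

section Stein

variable {F : Type*} [NormedAddCommGroup F] {f : E → F}

lemma lintegral_localMaximal_le_of_pos (hf : AEStronglyMeasurable f μ) {b : ℝ} (hb : 0 < b) :
    ∫⁻ x, localMaximal μ (fun y => ‖f y‖ₑ) x ∂μ ≤
      2 * (ENNReal.ofReal b * μ (thickening 1 (Function.support f)) + 5 ^ finrank ℝ E *
        ∫⁻ x, ENNReal.ofReal (lnp (‖f x‖ / b)) ∂μ.withDensity fun x => ‖f x‖ₑ) := by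
  set A := localMaximal μ fun y => ‖f y‖ₑ
  set ν := μ.withDensity fun x => ‖f x‖ₑ
  have hA : Measurable A := measurable_localMaximal μ _
  have hsupp : Function.support (fun x => ‖f x‖ₑ) = Function.support f := by
    simp only [Function.support, ne_eq, enorm_eq_zero]
  have hsmall : ∀ t : ℝ, μ {x | 2 * ENNReal.ofReal t < A x} ≤
      μ (thickening 1 (Function.support f)) := fun t =>
    hsupp ▸ measure_lt_localMaximal_le_measure_thickening _
  have hlarge : ∀ t ∈ Ioi b, μ {x | 2 * ENNReal.ofReal t < A x} ≤
      5 ^ finrank ℝ E * (ν {x | ENNReal.ofReal t < ‖f x‖ₑ} / ENNReal.ofReal t) := fun t ht => by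
    have ht₀ : ENNReal.ofReal t ≠ 0 := ENNReal.ofReal_ne_zero_iff.2 (hb.trans ht)
    rw [← mul_div_assoc, ENNReal.le_div_iff_mul_le (.inl ht₀) (.inl ENNReal.ofReal_ne_top),
      mul_comm]
    exact mul_measure_two_mul_lt_localMaximal_le _ _
  calc ∫⁻ x, A x ∂μ
      = 2 * ((∫⁻ t in Ioc 0 b, μ {x | 2 * ENNReal.ofReal t < A x}) +
          ∫⁻ t in Ioi b, μ {x | 2 * ENNReal.ofReal t < A x}) := by
        rw [lintegral_eq_mul_lintegral_meas_mul_ofReal_lt hA.aemeasurable two_ne_zero ofNat_ne_top,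
          ← Ioc_union_Ioi_eq_Ioi hb.le, lintegral_union measurableSet_Ioi (Ioc_disjoint_Ioi le_rfl)]
    _ ≤ 2 * ((∫⁻ _ in Ioc 0 b, μ (thickening 1 (Function.support f))) + ∫⁻ t in Ioi b,
          5 ^ finrank ℝ E * (ν {x | ENNReal.ofReal t < ‖f x‖ₑ} / ENNReal.ofReal t)) := by
        gcongr 2 * (?_ + ?_)
        · exact lintegral_mono hsmall
        · exact setLIntegral_mono' measurableSet_Ioi hlarge
    _ = _ := by
        rw [lintegral_lnp_norm_div_withDensity hf hb, ← lintegral_const_mul' _ _ (by simp)]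
        simp [ν, mul_comm]

lemma lintegral_localMaximal_le_mul_lLogL (hf : Integrable f μ) :
    ∫⁻ x, localMaximal μ (fun y => ‖f y‖ₑ) x ∂μ ≤
      2 * (μ (thickening 1 (Function.support f)) + 5 ^ finrank ℝ E) * lLogL μ f := by
  by_cases hf₀ : f =ᵐ[μ] 0
  · have hA : ∀ x, localMaximal μ (fun y => ‖f y‖ₑ) x = 0 :=
      localMaximal_eq_zero_of_ae_eq_zero (hf₀.mono fun x hx => by simp [hx])
    simp [hA]
  have hm : 0 < ∫ y, ‖f y‖ ∂μ := integral_norm_pos_of_not_ae_eq_zero hf hf₀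
  refine (lintegral_localMaximal_le_of_pos hf.aestronglyMeasurable hm).trans ?_
  rw [ofReal_integral_norm_eq_lintegral_enorm hf, mul_assoc, add_mul, mul_comm (∫⁻ _, _ ∂_)]
  gcongr 2 * (_ * ?_ + _ * ?_) <;> rw [lLogL_eq_lintegral_enorm_add hf.aestronglyMeasurable]
  · exact le_self_add
  · exact le_add_self

lemma lintegral_lnp_div_le_mul_lintegral_localMaximal (hf : Integrable f μ) {b : ℝ} (hb : 0 < b)
    (hfb : ∫⁻ x, ‖f x‖ₑ ∂μ ≤ ENNReal.ofReal b * μ (ball 0 (1 / 2))) :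
    ∫⁻ x, ENNReal.ofReal (lnp (‖f x‖ / b)) ∂μ.withDensity (fun x => ‖f x‖ₑ) ≤
      10 ^ finrank ℝ E * ∫⁻ x, localMaximal μ (fun y => ‖f y‖ₑ) x ∂μ := by
  set A := localMaximal μ fun y => ‖f y‖ₑ
  set ν := μ.withDensity fun x => ‖f x‖ₑ
  have hA : Measurable fun x => 2 ^ finrank ℝ E * A x :=
    (measurable_localMaximal μ _).const_mul _
  have hlevel : ∀ t ∈ Ioi b, ν {x | ENNReal.ofReal t < ‖f x‖ₑ} / ENNReal.ofReal t ≤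
      5 ^ finrank ℝ E * μ {x | ENNReal.ofReal t < 2 ^ finrank ℝ E * A x} := fun t ht => by
    refine ENNReal.div_le_of_le_mul' ?_
    rw [← mul_assoc, mul_comm (ENNReal.ofReal t)]
    refine withDensity_gt_le_mul_measure_lt_localMaximal hf.1.enorm hf.2.ne (hfb.trans ?_)
    gcongr
    exact (mem_Ioi.1 ht).le
  calc ∫⁻ x, ENNReal.ofReal (lnp (‖f x‖ / b)) ∂ν
      = ∫⁻ t in Ioi b, ν {x | ENNReal.ofReal t < ‖f x‖ₑ} / ENNReal.ofReal t :=
        lintegral_lnp_norm_div_withDensity hf.1 hb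
    _ ≤ ∫⁻ t in Ioi b, 5 ^ finrank ℝ E * μ {x | ENNReal.ofReal t < 2 ^ finrank ℝ E * A x} :=
        setLIntegral_mono' measurableSet_Ioi hlevel
    _ ≤ ∫⁻ t in Ioi 0, 5 ^ finrank ℝ E * μ {x | ENNReal.ofReal t < 2 ^ finrank ℝ E * A x} :=
        lintegral_mono_set (Ioi_subset_Ioi hb.le)
    _ = 5 ^ finrank ℝ E * ∫⁻ x, 2 ^ finrank ℝ E * A x ∂μ := by
        rw [lintegral_const_mul' _ _ (by simp),
          ← lintegral_eq_lintegral_meas_ofReal_lt hA.aemeasurable]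
    _ = 10 ^ finrank ℝ E * ∫⁻ x, A x ∂μ := by
        rw [lintegral_const_mul' _ _ (by simp), ← mul_assoc, ← mul_pow]
        norm_num

lemma lLogL_le_mul_lintegral_localMaximal (hf : Integrable f μ) :
    lLogL μ f ≤
      (10 ^ finrank ℝ E + (1 + ENNReal.ofReal (lnp (μ.real (ball 0 (1 / 2)))⁻¹))) *
        ∫⁻ x, localMaximal μ (fun y => ‖f y‖ₑ) x ∂μ := by
  by_cases hf₀ : f =ᵐ[μ] 0
  · simp [lLogL_eq_zero_of_ae_eq_zero hf₀]
  set m := ∫ y, ‖f y‖ ∂μ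
  set v := μ.real (ball 0 (1 / 2))
  set ν := μ.withDensity fun x => ‖f x‖ₑ
  have hm : 0 < m := integral_norm_pos_of_not_ae_eq_zero hf hf₀
  have hv : 0 < v :=
    ENNReal.toReal_pos (measure_ball_pos μ 0 (by norm_num)).ne' measure_ball_lt_top.ne
  have hfb : ∫⁻ x, ‖f x‖ₑ ∂μ ≤ ENNReal.ofReal (m / v) * μ (ball 0 (1 / 2)) := by
    rw [← ofReal_integral_norm_eq_lintegral_enorm hf, ← ofReal_measureReal measure_ball_lt_top.ne,
      ← ENNReal.ofReal_mul (by positivity), div_mul_cancel₀ _ hv.ne']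
  have hnorm : ∫⁻ x, ‖f x‖ₑ ∂μ ≤ ∫⁻ x, localMaximal μ (fun y => ‖f y‖ₑ) x ∂μ :=
    lintegral_mono_ae (ae_le_localMaximal hf.1.enorm hf.2.ne)
  have hlog : ∫⁻ x, ENNReal.ofReal (lnp (‖f x‖ / m)) ∂ν ≤
      ∫⁻ x, ENNReal.ofReal (lnp (‖f x‖ / (m / v))) ∂ν +
        ENNReal.ofReal (lnp v⁻¹) * ∫⁻ x, ‖f x‖ₑ ∂μ := by
    calc ∫⁻ x, ENNReal.ofReal (lnp (‖f x‖ / m)) ∂ν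
        ≤ ∫⁻ x, (ENNReal.ofReal (lnp (‖f x‖ / (m / v))) + ENNReal.ofReal (lnp v⁻¹)) ∂ν :=
          lintegral_mono fun x => by
            rw [← ENNReal.ofReal_add (lnp_nonneg _) (lnp_nonneg _)]
            refine ENNReal.ofReal_le_ofReal (le_trans (le_of_eq ?_) (lnp_mul_le _ _))
            congr 1
            field_simp
      _ = _ := by
          rw [lintegral_add_right _ measurable_const, lintegral_const,
            withDensity_apply _ MeasurableSet.univ, Measure.restrict_univ]
  calc lLogL μ f
      ≤ ∫⁻ x, ‖f x‖ₑ ∂μ + (∫⁻ x, ENNReal.ofReal (lnp (‖f x‖ / (m / v))) ∂ν +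
          ENNReal.ofReal (lnp v⁻¹) * ∫⁻ x, ‖f x‖ₑ ∂μ) := by
        rw [lLogL_eq_lintegral_enorm_add hf.1]
        gcongr
    _ = ∫⁻ x, ENNReal.ofReal (lnp (‖f x‖ / (m / v))) ∂ν +
          (1 + ENNReal.ofReal (lnp v⁻¹)) * ∫⁻ x, ‖f x‖ₑ ∂μ := by ring
    _ ≤ 10 ^ finrank ℝ E * ∫⁻ x, localMaximal μ (fun y => ‖f y‖ₑ) x ∂μ +
          (1 + ENNReal.ofReal (lnp v⁻¹)) * ∫⁻ x, localMaximal μ (fun y => ‖f y‖ₑ) x ∂μ := by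
        gcongr
        exact lintegral_lnp_div_le_mul_lintegral_localMaximal hf (by positivity) hfb
    _ = _ := by rw [← add_mul]

lemma ae_localMaximal_lt_top_of_lintegral_ne_top (hg : ∫⁻ x, g x ∂μ ≠ ⊤) :
    ∀ᵐ x ∂μ, localMaximal μ g x < ⊤ := by
  simp only [ae_iff, not_lt_top_iff]
  by_contra htop
  obtain ⟨j, hj⟩ := ENNReal.exists_nat_mul_gt htop
    (ENNReal.mul_ne_top (by simp) hg : 5 ^ finrank ℝ E * ∫⁻ x, g x ∂μ ≠ ⊤)
  refine hj.not_ge (le_trans ?_ (mul_measure_lt_localMaximal_le g j))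
  gcongr with x hx
  exact fun hx => (ENNReal.natCast_lt_top j).trans_eq hx.symm

lemma ae_localMaximal_enorm_lt_top (hf : LocallyIntegrable f μ) :
    ∀ᵐ x ∂μ, localMaximal μ (fun y => ‖f y‖ₑ) x < ⊤ := by
  have hball : ∀ R : ℕ, ∀ᵐ x ∂μ, x ∈ ball 0 (R : ℝ) → localMaximal μ (fun y => ‖f y‖ₑ) x < ⊤ :=
      fun R => by
    have hfin : ∫⁻ x, (ball 0 (R + 1 : ℝ)).indicator (fun y => ‖f y‖ₑ) x ∂μ ≠ ⊤ := by
      rw [lintegral_indicator measurableSet_ball]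
      exact ((hf.integrableOn_isCompact (isCompact_closedBall 0 _)).mono_set
        ball_subset_closedBall).2.ne
    filter_upwards [ae_localMaximal_lt_top_of_lintegral_ne_top hfin] with x hx hxR
    rwa [localMaximal_congr_of_eqOn_ball (eqOn_indicator.mono (ball_subset_ball' ?_))] at hx
    linarith [mem_ball.1 hxR]
  filter_upwards [ae_all_iff.2 hball] with x hx
  obtain ⟨R, hR⟩ := exists_nat_gt ‖x‖
  exact hx R (mem_ball_zero_iff.2 hR)

section Decomposition

variable {ι : Type*} [Countable ι] {S : ι → Set E}

lemma lintegral_localMaximal_le_mul_tsum_lLogL (hS : ∀ k, MeasurableSet (S k))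
    (hcover : ∀ᵐ x ∂μ, ∃ k, x ∈ S k) (hf : ∀ k, IntegrableOn f (S k) μ) {V : ℝ≥0∞}
    (hV : ∀ k, μ (thickening 1 (S k)) ≤ V) :
    ∫⁻ x, localMaximal μ (fun y => ‖f y‖ₑ) x ∂μ ≤
      2 * (V + 5 ^ finrank ℝ E) * ∑' k, lLogL (μ.restrict (S k)) f := by
  have hfS : ∀ k, Integrable ((S k).indicator f) μ := fun k => (hf k).integrable_indicator (hS k)
  have hf_le : (fun y => ‖f y‖ₑ) ≤ᵐ[μ] fun y => ∑' k, ‖(S k).indicator f y‖ₑ := by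
    filter_upwards [hcover] with y ⟨k, hk⟩
    simpa only [indicator_of_mem hk] using ENNReal.le_tsum (f := fun k => ‖(S k).indicator f y‖ₑ) k
  calc ∫⁻ x, localMaximal μ (fun y => ‖f y‖ₑ) x ∂μ
      ≤ ∫⁻ x, ∑' k, localMaximal μ (fun y => ‖(S k).indicator f y‖ₑ) x ∂μ :=
        lintegral_mono fun x => (localMaximal_mono_ae hf_le x).trans
          (localMaximal_tsum_le (fun k => (hfS k).1.enorm) x)
    _ = ∑' k, ∫⁻ x, localMaximal μ (fun y => ‖(S k).indicator f y‖ₑ) x ∂μ :=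
        lintegral_tsum fun k => (measurable_localMaximal μ _).aemeasurable
    _ ≤ ∑' k, 2 * (V + 5 ^ finrank ℝ E) * lLogL (μ.restrict (S k)) f := by
        refine ENNReal.tsum_le_tsum fun k => ?_
        rw [← lLogL_indicator (hS k)]
        refine (lintegral_localMaximal_le_mul_lLogL (hfS k)).trans ?_
        gcongr
        exact (measure_mono (thickening_subset_of_subset 1 support_indicator_subset)).trans (hV k)
    _ = 2 * (V + 5 ^ finrank ℝ E) * ∑' k, lLogL (μ.restrict (S k)) f := ENNReal.tsum_mul_left

lemma lLogL_restrict_le_mul_setLIntegral_localMaximal {S : Set E} (hS : MeasurableSet S)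
    (hf : IntegrableOn f S μ) :
    lLogL (μ.restrict S) f ≤
      (10 ^ finrank ℝ E + (1 + ENNReal.ofReal (lnp (μ.real (ball 0 (1 / 2)))⁻¹))) *
        ∫⁻ x in thickening 1 S, localMaximal μ (fun y => ‖f y‖ₑ) x ∂μ := by
  rw [← lLogL_indicator hS, ← lintegral_indicator isOpen_thickening.measurableSet]
  refine (lLogL_le_mul_lintegral_localMaximal (hf.integrable_indicator hS)).trans ?_
  gcongr with x
  by_cases hx : x ∈ thickening 1 S
  · rw [indicator_of_mem hx]
    exact localMaximal_mono_ae (ae_of_all _ fun y => enorm_indicator_le_enorm_self f y) x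
  · refine (localMaximal_eq_zero_of_notMem_thickening_support fun hx' => hx ?_).trans_le zero_le
    refine thickening_subset_of_subset 1 (fun y hy => ?_) hx'
    by_contra hyS
    simp [hyS] at hy

lemma tsum_lLogL_le_mul_lintegral_localMaximal (hS : ∀ k, MeasurableSet (S k))
    (hf : ∀ k, IntegrableOn f (S k) μ) {N : ℝ≥0∞}
    (hN : ∀ x, ∑' k, (thickening 1 (S k)).indicator 1 x ≤ N) :
    ∑' k, lLogL (μ.restrict (S k)) f ≤
      (10 ^ finrank ℝ E + (1 + ENNReal.ofReal (lnp (μ.real (ball 0 (1 / 2)))⁻¹))) *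
        (N * ∫⁻ x, localMaximal μ (fun y => ‖f y‖ₑ) x ∂μ) := by
  set A := localMaximal μ fun y => ‖f y‖ₑ
  have hA : Measurable A := measurable_localMaximal μ _
  have hthick : ∀ k, MeasurableSet (thickening 1 (S k)) := fun k =>
    isOpen_thickening.measurableSet
  refine (ENNReal.tsum_le_tsum fun k =>
    lLogL_restrict_le_mul_setLIntegral_localMaximal (hS k) (hf k)).trans ?_
  rw [ENNReal.tsum_mul_left]
  gcongr
  calc ∑' k, ∫⁻ x in thickening 1 (S k), A x ∂μ
      = ∑' k, ∫⁻ x, (thickening 1 (S k)).indicator 1 x * A x ∂μ :=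
        tsum_congr fun k => by
          rw [← lintegral_indicator (hthick k)]
          exact lintegral_congr fun x => by by_cases hx : x ∈ thickening 1 (S k) <;> simp [hx]
    _ = ∫⁻ x, (∑' k, (thickening 1 (S k)).indicator 1 x) * A x ∂μ := by
        rw [← lintegral_tsum fun k =>
          ((measurable_one.indicator (hthick k)).fun_mul hA).aemeasurable]
        simp only [ENNReal.tsum_mul_right]
    _ ≤ ∫⁻ x, N * A x ∂μ := lintegral_mono fun x => by gcongr; exact hN x
    _ = N * ∫⁻ x, A x ∂μ := lintegral_const_mul _ hA

theorem lintegral_localMaximal_lt_top_iff_tsum_lLogL_lt_top (hS : ∀ k, MeasurableSet (S k))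
    (hcover : ∀ᵐ x ∂μ, ∃ k, x ∈ S k) (hf : ∀ k, IntegrableOn f (S k) μ) {V N : ℝ≥0∞}
    (hV_fin : V ≠ ⊤) (hV : ∀ k, μ (thickening 1 (S k)) ≤ V)
    (hN_fin : N ≠ ⊤) (hN : ∀ x, ∑' k, (thickening 1 (S k)).indicator 1 x ≤ N) :
    ∫⁻ x, localMaximal μ (fun y => ‖f y‖ₑ) x ∂μ < ⊤ ↔
      ∑' k, lLogL (μ.restrict (S k)) f < ⊤ :=
  ⟨fun h => (tsum_lLogL_le_mul_lintegral_localMaximal hS hf hN).trans_lt (by finiteness),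
    fun h => (lintegral_localMaximal_le_mul_tsum_lLogL hS hcover hf hV).trans_lt (by finiteness)⟩

end Decomposition

end Stein

end Haar

section Cubes

variable {n : ℕ} {k : Fin n → ℤ} {x : En n}

lemma measurableSet_Qk (n : ℕ) (k : Fin n → ℤ) : MeasurableSet (Qk n k) := by
  have hcoord : ∀ i, Measurable fun x : En n => x i := fun i => by fun_prop
  simp only [Qk, ofPred_forall]
  exact .iInter fun i => (measurableSet_lt measurable_const (hcoord i)).inter
    (measurableSet_lt (hcoord i) measurable_const)

lemma ae_exists_mem_Qk (n : ℕ) : ∀ᵐ x : En n, ∃ k, x ∈ Qk n k := by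
  have hface : ∀ (i : Fin n) (j : ℤ), ∀ᵐ x : En n, x i ≠ j - 1 / 2 := fun i j => by
    have hpi : ∀ᵐ y : Fin n → ℝ, y i ≠ j - 1 / 2 := by
      simpa [ae_iff, volume_pi] using Measure.pi_hyperplane _ i _
    exact (PiLp.volume_preserving_ofLp (Fin n)).quasiMeasurePreserving.ae hpi
  filter_upwards [ae_all_iff.2 fun i => ae_all_iff.2 (hface i)] with x hx
  refine ⟨fun i => ⌊x i + 1 / 2⌋, fun i => ⟨lt_of_le_of_ne ?_ (hx i _).symm, ?_⟩⟩
  · linarith [Int.floor_le (x i + 1 / 2)]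
  · linarith [Int.lt_floor_add_one (x i + 1 / 2)]

lemma integrableOn_Qk_of_locallyIntegrable {f : En n → ℝ} (hf : LocallyIntegrable f)
    (k : Fin n → ℤ) : IntegrableOn f (Qk n k) := by
  have hcompact : IsCompact (WithLp.toLp 2 '' Icc (fun i => (k i : ℝ) - 1 / 2)
      (fun i => (k i : ℝ) + 1 / 2)) := isCompact_Icc.image (PiLp.continuous_toLp 2 _)
  exact (hf.integrableOn_isCompact hcompact).mono_set fun x hx =>
    ⟨x.ofLp, ⟨fun i => (hx i).1.le, fun i => (hx i).2.le⟩, rfl⟩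

lemma abs_sub_lt_of_mem_thickening_Qk (hx : x ∈ thickening 1 (Qk n k)) (i : Fin n) :
    |x i - k i| < 3 / 2 := by
  obtain ⟨y, hy, hxy⟩ := mem_thickening_iff.1 hx
  have hi : |x i - y i| < 1 := (PiLp.norm_apply_le (x - y) i).trans_lt (by rwa [← dist_eq_norm])
  rw [abs_lt] at hi ⊢
  constructor <;> linarith [(hy i).1, (hy i).2]

lemma volume_thickening_Qk_le (n : ℕ) (k : Fin n → ℤ) :
    volume (thickening 1 (Qk n k)) ≤ 3 ^ n := by
  set box : Set (Fin n → ℝ) := univ.pi fun i => Ioo ((k i : ℝ) - 3 / 2) (k i + 3 / 2)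
  have hsub : thickening 1 (Qk n k) ⊆ WithLp.ofLp ⁻¹' box := fun x hx i _ => by
    have hi := abs_lt.1 (abs_sub_lt_of_mem_thickening_Qk hx i)
    constructor <;> linarith
  have hside : ∀ i, (k i : ℝ) + 3 / 2 - (k i - 3 / 2) = 3 := fun i => by ring
  calc volume (thickening 1 (Qk n k)) ≤ volume (WithLp.ofLp ⁻¹' box) := measure_mono hsub
    _ = volume box := (PiLp.volume_preserving_ofLp (Fin n)).measure_preimage
        (MeasurableSet.univ_pi fun i => measurableSet_Ioo).nullMeasurableSet
    _ = 3 ^ n := by simp [box, Real.volume_pi_Ioo, hside]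

lemma tsum_indicator_thickening_Qk_le (x : En n) :
    ∑' k, (thickening 1 (Qk n k)).indicator 1 x ≤ (4 ^ n : ℝ≥0∞) := by
  set near : Finset (Fin n → ℤ) := Fintype.piFinset fun i => Finset.Icc (⌊x i⌋ - 1) (⌊x i⌋ + 2)
  have hfar : ∀ k ∉ near, (thickening 1 (Qk n k)).indicator (1 : En n → ℝ≥0∞) x = 0 := by
    refine fun k hk => indicator_of_notMem (fun hx => hk ?_) _
    refine Fintype.mem_piFinset.2 fun i => Finset.mem_Icc.2 ?_
    have hi := abs_lt.1 (abs_sub_lt_of_mem_thickening_Qk hx i)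
    rw [sub_le_iff_le_add, Int.floor_le_iff, ← sub_le_iff_le_add, Int.le_floor]
    push_cast
    constructor <;> linarith
  have hcard : near.card = 4 ^ n := by
    have hside : ∀ i, (⌊x i⌋ + 2 + 1 - (⌊x i⌋ - 1)).toNat = 4 := fun i => by omega
    simp [near, hside]
  calc ∑' k, (thickening 1 (Qk n k)).indicator 1 x
      = ∑ k ∈ near, (thickening 1 (Qk n k)).indicator 1 x := tsum_eq_sum hfar
    _ ≤ ∑ _k ∈ near, 1 := Finset.sum_le_sum fun k _ => indicator_le_self' (by simp) x
    _ = 4 ^ n := by simp [hcard]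

end Cubes

section Characterization

variable {n : ℕ} {f : En n → ℝ}

lemma Mloc_eq_toReal_localMaximal (hf : LocallyIntegrable f) (x : En n) :
    Mloc n f x =
      (volume (ball (0 : En n) 1) * localMaximal volume (fun y => ‖f y‖ₑ) x).toReal := by
  have hscale : ∀ r : Ioo (0 : ℝ) 1,
      volume (ball (0 : En n) 1) * ⨍⁻ y in ball x r, ‖f y‖ₑ ∂volume =
        ENNReal.ofReal (((r : ℝ) ^ n)⁻¹ * ∫ y in ball x (r : ℝ), |f y|) := fun ⟨r, hr, _⟩ => by
    have hint : IntegrableOn f (ball x r) :=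
      (hf.integrableOn_isCompact (isCompact_closedBall x r)).mono_set ball_subset_closedBall
    rw [setLAverage_eq, ← ofReal_integral_norm_eq_lintegral_enorm hint,
      Measure.addHaar_ball_of_pos volume x hr, finrank_euclideanSpace_fin,
      mul_comm (ENNReal.ofReal _), ← mul_div_assoc,
      ENNReal.mul_div_mul_left _ _ (measure_ball_pos _ _ one_pos).ne' measure_ball_lt_top.ne,
      ENNReal.ofReal_mul (by positivity),
      ENNReal.ofReal_inv_of_pos (by positivity), ENNReal.div_eq_inv_mul]
    rfl
  rw [localMaximal, ENNReal.mul_iSup, Mloc]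
  simp only [hscale]
  rw [ENNReal.toReal_iSup fun _ => ENNReal.ofReal_ne_top]
  refine iSup_congr fun ⟨r, hr, _⟩ => (ENNReal.toReal_ofReal ?_).symm
  exact mul_nonneg (by positivity) (integral_nonneg fun _ => abs_nonneg _)

lemma integrable_Mloc_iff_lintegral_localMaximal_lt_top (hf : LocallyIntegrable f) :
    Integrable (Mloc n f) ↔ ∫⁻ x, localMaximal volume (fun y => ‖f y‖ₑ) x < ⊤ := by
  have hball : volume (ball (0 : En n) 1) ≠ ⊤ := measure_ball_lt_top.ne
  have hA := measurable_localMaximal (volume : Measure (En n)) fun y => ‖f y‖ₑ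
  rw [funext (Mloc_eq_toReal_localMaximal hf), integrable_toReal_iff (hA.const_mul _).aemeasurable
      ((ae_localMaximal_enorm_lt_top hf).mono fun x hx => ENNReal.mul_ne_top hball hx.ne),
    lintegral_const_mul _ hA, ← lt_top_iff_ne_top, ENNReal.mul_lt_top_iff]
  simpa [hball.lt_top, (measure_ball_pos (volume : Measure (En n)) 0 one_pos).ne'] using
    fun h => h.trans_lt zero_lt_top

theorem local_stein_characterization_general (hf : LocallyIntegrable f) :
    Integrable (Mloc n f) ↔
      ∑' k : Fin n → ℤ,
        ∫⁻ x in Qk n k, ENNReal.ofReal (|f x| * (1 + lnp (|f x| / muk n f k))) < ⊤ := by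
  rw [integrable_Mloc_iff_lintegral_localMaximal_lt_top hf]
  exact lintegral_localMaximal_lt_top_iff_tsum_lLogL_lt_top (measurableSet_Qk n)
    (ae_exists_mem_Qk n) (integrableOn_Qk_of_locallyIntegrable hf) (by finiteness)
    (volume_thickening_Qk_le n) (by finiteness) tsum_indicator_thickening_Qk_le

end Characterization

/-- **Characterization of integrability of the local maximal function.**
For integrable `f`, `M^loc f ∈ L^1(ℝ^n)` iff
`∑_{k∈ℤ^n} ∫_{Q_k} |f_k| (1 + ln₊(|f_k|/μ_k)) < ∞`. -/
theorem local_stein_characterization (n : ℕ) (hn : 1 ≤ n) (f : En n → ℝ)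
    (hf : Integrable f) :
    Integrable (Mloc n f) ↔
      ∑' k : Fin n → ℤ,
        ∫⁻ x in Qk n k, ENNReal.ofReal (|f x| * (1 + lnp (|f x| / muk n f k))) < ⊤ :=
  local_stein_characterization_general hf.locallyIntegrable
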